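/- arXiv:1903.12512 — 13 statements merged into one kernel-verified Lean document; each statement's English description precedes it below -/
import Mathlib

section
/- Let k be a field, A an associative unital k-algebra, and Δ a nearly Frobenius coproduct on A. Then Δ is coassociative: (Δ ⊗ id_A) ∘ Δ = (id_A ⊗ Δ) ∘ Δ as linear maps A → A ⊗[k] A ⊗[k] A. -/
open TensorProduct

/-- A nearly Frobenius coproduct on a `k`-algebra `A`: a `k`-linear map
`Δ : A → A ⊗[k] A` which is a morphism of `A`-bimodules, i.e.
`Δ (a * b) = (a ⊗ 1) * Δ b` and `Δ (a * b) = Δ a * (1 ⊗ b)`. -/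
def IsNearlyFrobenius (k A : Type*) [Field k] [Ring A] [Algebra k A]
    (Δ : A →ₗ[k] A ⊗[k] A) : Prop :=
  ∀ a b : A, Δ (a * b) = (a ⊗ₜ[k] (1 : A)) * Δ b ∧ Δ (a * b) = Δ a * ((1 : A) ⊗ₜ[k] b)

/-- Multiplying the first two tensor factors through the associator. -/
theorem nf_assoc_aux (k A : Type*) [Field k] [Ring A] [Algebra k A]
    (s : A ⊗[k] A) (x y : A) :
    TensorProduct.assoc k A A A ((s * ((1 : A) ⊗ₜ[k] x)) ⊗ₜ[k] y) =
      TensorProduct.assoc k A A A (s ⊗ₜ[k] (1 : A)) * ((1 : A) ⊗ₜ[k] (x ⊗ₜ[k] y)) := by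
  induction s with
  | zero => simp
  | tmul p q => simp
  | add s t hs ht => simp only [add_mul, TensorProduct.add_tmul, map_add, hs, ht]

theorem nf_left (k A : Type*) [Field k] [Ring A] [Algebra k A]
    (Δ : A →ₗ[k] A ⊗[k] A)
    (h : ∀ x, Δ x = Δ 1 * ((1 : A) ⊗ₜ[k] x)) (t : A ⊗[k] A) :
    TensorProduct.assoc k A A A (TensorProduct.map Δ LinearMap.id t) =
      TensorProduct.assoc k A A A (Δ 1 ⊗ₜ[k] (1 : A)) * ((1 : A) ⊗ₜ[k] t) := by
  induction t with
  | zero => simp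
  | tmul p q => rw [TensorProduct.map_tmul, h p, nf_assoc_aux]; rfl
  | add s t hs ht => simp only [mul_add, TensorProduct.tmul_add, map_add, hs, ht]

theorem nf_right (k A : Type*) [Field k] [Ring A] [Algebra k A]
    (Δ : A →ₗ[k] A ⊗[k] A)
    (h : ∀ x, Δ x = (x ⊗ₜ[k] (1 : A)) * Δ 1) (t : A ⊗[k] A) :
    TensorProduct.map LinearMap.id Δ t =
      TensorProduct.assoc k A A A (t ⊗ₜ[k] (1 : A)) * ((1 : A) ⊗ₜ[k] Δ 1) := by
  induction t with
  | zero => simp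
  | tmul p q =>
    rw [TensorProduct.map_tmul, h q, TensorProduct.assoc_tmul,
      Algebra.TensorProduct.tmul_mul_tmul, mul_one]; rfl
  | add s t hs ht => simp only [add_mul, TensorProduct.add_tmul, map_add, hs, ht]

/-- Every nearly Frobenius coproduct is coassociative:
`(Δ ⊗ id) ∘ Δ = (id ⊗ Δ) ∘ Δ` (up to the canonical associator). -/
theorem nearlyFrobenius_coassoc (k A : Type*) [Field k] [Ring A] [Algebra k A]
    (Δ : A →ₗ[k] A ⊗[k] A) (hΔ : IsNearlyFrobenius k A Δ) :
    (TensorProduct.assoc k A A A).toLinearMap ∘ₗ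
        (TensorProduct.map Δ LinearMap.id) ∘ₗ Δ =
      (TensorProduct.map LinearMap.id Δ) ∘ₗ Δ := by
  have h1 : ∀ x, Δ x = Δ 1 * ((1 : A) ⊗ₜ[k] x) := fun x => by
    simpa using (hΔ 1 x).2
  have h2 : ∀ x, Δ x = (x ⊗ₜ[k] (1 : A)) * Δ 1 := fun x => by
    simpa using (hΔ x 1).1
  ext a
  change TensorProduct.assoc k A A A (TensorProduct.map Δ LinearMap.id (Δ a)) =
    TensorProduct.map LinearMap.id Δ (Δ a)
  rw [nf_left k A Δ h1, nf_right k A Δ h2]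
  conv_rhs => rw [h1 a, nf_assoc_aux, mul_assoc, Algebra.TensorProduct.tmul_mul_tmul, mul_one,
    ← h2 a]
end

section
/- Let (A, Δ_A) and (B, Δ_B) be nearly Frobenius algebras over k, and let A × B be the product algebra with componentwise operations. Let ι_A : A → A × B, a ↦ (a, 0) and ι_B : B → A × B, b ↦ (0, b) be the canonical k-linear inclusions and π_A, π_B the projections. Then the k-linear map Δ := (ι_A ⊗ ι_A) ∘ Δ_A ∘ π_A + (ι_B ⊗ ι_B) ∘ Δ_B ∘ π_B : A × B → (A × B) ⊗[k] (A × B) is a nearly Frobenius coproduct on A × B. -/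
open TensorProduct

theorem map_inl_left (k A B : Type*) [Field k]
    [Ring A] [Algebra k A] [Ring B] [Algebra k B] (a : A × B) (x : A ⊗[k] A) :
    TensorProduct.map (LinearMap.inl k A B) (LinearMap.inl k A B) ((a.1 ⊗ₜ[k] (1 : A)) * x) =
      (a ⊗ₜ[k] (1 : A × B)) * TensorProduct.map (LinearMap.inl k A B) (LinearMap.inl k A B) x := by
  induction x with
  | zero => simp
  | add x y hx hy => simp only [mul_add, add_mul, map_add, hx, hy]
  | tmul x y =>
    simp only [Algebra.TensorProduct.tmul_mul_tmul, TensorProduct.map_tmul, one_mul, mul_one]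
    congr 1 <;> ext <;> simp

theorem map_inl_right (k A B : Type*) [Field k]
    [Ring A] [Algebra k A] [Ring B] [Algebra k B] (a : A × B) (x : A ⊗[k] A) :
    TensorProduct.map (LinearMap.inl k A B) (LinearMap.inl k A B) (x * ((1 : A) ⊗ₜ[k] a.1)) =
      TensorProduct.map (LinearMap.inl k A B) (LinearMap.inl k A B) x * ((1 : A × B) ⊗ₜ[k] a) := by
  induction x with
  | zero => simp
  | add x y hx hy => simp only [mul_add, add_mul, map_add, hx, hy]
  | tmul x y =>
    simp only [Algebra.TensorProduct.tmul_mul_tmul, TensorProduct.map_tmul, one_mul, mul_one]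
    congr 1 <;> ext <;> simp

theorem map_inr_left (k A B : Type*) [Field k]
    [Ring A] [Algebra k A] [Ring B] [Algebra k B] (a : A × B) (x : B ⊗[k] B) :
    TensorProduct.map (LinearMap.inr k A B) (LinearMap.inr k A B) ((a.2 ⊗ₜ[k] (1 : B)) * x) =
      (a ⊗ₜ[k] (1 : A × B)) * TensorProduct.map (LinearMap.inr k A B) (LinearMap.inr k A B) x := by
  induction x with
  | zero => simp
  | add x y hx hy => simp only [mul_add, add_mul, map_add, hx, hy]
  | tmul x y =>
    simp only [Algebra.TensorProduct.tmul_mul_tmul, TensorProduct.map_tmul, one_mul, mul_one]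
    congr 1 <;> ext <;> simp

theorem map_inr_right (k A B : Type*) [Field k]
    [Ring A] [Algebra k A] [Ring B] [Algebra k B] (a : A × B) (x : B ⊗[k] B) :
    TensorProduct.map (LinearMap.inr k A B) (LinearMap.inr k A B) (x * ((1 : B) ⊗ₜ[k] a.2)) =
      TensorProduct.map (LinearMap.inr k A B) (LinearMap.inr k A B) x * ((1 : A × B) ⊗ₜ[k] a) := by
  induction x with
  | zero => simp
  | add x y hx hy => simp only [mul_add, add_mul, map_add, hx, hy]
  | tmul x y =>
    simp only [Algebra.TensorProduct.tmul_mul_tmul, TensorProduct.map_tmul, one_mul, mul_one]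
    congr 1 <;> ext <;> simp

/-- the coproduct `(ι_A ⊗ ι_A) ∘ Δ_A ∘ π_A + (ι_B ⊗ ι_B) ∘ Δ_B ∘ π_B`
on the product algebra `A × B` is nearly Frobenius. -/
theorem isNearlyFrobenius_prod (k A B : Type*) [Field k]
    [Ring A] [Algebra k A] [Ring B] [Algebra k B]
    (ΔA : A →ₗ[k] A ⊗[k] A) (hΔA : IsNearlyFrobenius k A ΔA)
    (ΔB : B →ₗ[k] B ⊗[k] B) (hΔB : IsNearlyFrobenius k B ΔB) :
    IsNearlyFrobenius k (A × B)
      (TensorProduct.map (LinearMap.inl k A B) (LinearMap.inl k A B) ∘ₗ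
          ΔA ∘ₗ LinearMap.fst k A B +
        TensorProduct.map (LinearMap.inr k A B) (LinearMap.inr k A B) ∘ₗ
          ΔB ∘ₗ LinearMap.snd k A B) := by
  intro a b
  simp only [LinearMap.add_apply, LinearMap.comp_apply, LinearMap.fst_apply,
    LinearMap.snd_apply, Prod.fst_mul, Prod.snd_mul]
  constructor
  · rw [(hΔA _ _).1, (hΔB _ _).1, map_inl_left, map_inr_left, mul_add]
  · rw [(hΔA _ _).2, (hΔB _ _).2, map_inl_right, map_inr_right, add_mul]
end

section
/- Let (A, Δ_A) and (B, Δ_B) be nearly Frobenius algebras over k, and let τ : (A ⊗[k] A) ⊗[k] (B ⊗[k] B) → (A ⊗[k] B) ⊗[k] (A ⊗[k] B) be the middle-interchange (tensor-tensor-tensor commutativity) isomorphism. Then Δ := τ ∘ (Δ_A ⊗ Δ_B) is a nearly Frobenius coproduct on the tensor product algebra A ⊗[k] B. -/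
open TensorProduct

/-- the coproduct `τ ∘ (Δ_A ⊗ Δ_B)` on the tensor product algebra
`A ⊗[k] B`, where `τ` is the middle-interchange isomorphism, is nearly
Frobenius. -/
theorem isNearlyFrobenius_tensor (k A B : Type*) [Field k]
    [Ring A] [Algebra k A] [Ring B] [Algebra k B]
    (ΔA : A →ₗ[k] A ⊗[k] A) (hΔA : IsNearlyFrobenius k A ΔA)
    (ΔB : B →ₗ[k] B ⊗[k] B) (hΔB : IsNearlyFrobenius k B ΔB) :
    IsNearlyFrobenius k (A ⊗[k] B)
      ((TensorProduct.tensorTensorTensorComm k A A B B).toLinearMap ∘ₗ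
        TensorProduct.map ΔA ΔB) := by
  have hmul : ∀ x y, TensorProduct.tensorTensorTensorComm k A A B B (x * y) =
      TensorProduct.tensorTensorTensorComm k A A B B x *
        TensorProduct.tensorTensorTensorComm k A A B B y := fun x y =>
    map_mul (Algebra.TensorProduct.tensorTensorTensorComm k k k k A A B B) x y
  intro x y
  simp only [LinearMap.comp_apply, LinearEquiv.coe_coe]
  constructor
  · induction x with
    | zero => simp
    | add x₁ x₂ h₁ h₂ => simp only [add_mul, map_add, h₁, h₂, TensorProduct.add_tmul]
    | tmul a b =>
      induction y with
      | zero => simp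
      | add y₁ y₂ h₁ h₂ => simp only [mul_add, map_add, h₁, h₂]
      | tmul c d =>
        rw [Algebra.TensorProduct.tmul_mul_tmul, TensorProduct.map_tmul, TensorProduct.map_tmul,
          (hΔA a c).1, (hΔB b d).1, ← Algebra.TensorProduct.tmul_mul_tmul, hmul,
          TensorProduct.tensorTensorTensorComm_tmul, Algebra.TensorProduct.one_def]
  · induction y with
    | zero => simp
    | add y₁ y₂ h₁ h₂ => simp only [mul_add, map_add, h₁, h₂, TensorProduct.tmul_add]
    | tmul c d =>
      induction x with
      | zero => simp
      | add x₁ x₂ h₁ h₂ => simp only [add_mul, map_add, h₁, h₂]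
      | tmul a b =>
        rw [Algebra.TensorProduct.tmul_mul_tmul, TensorProduct.map_tmul, TensorProduct.map_tmul,
          (hΔA a c).2, (hΔB b d).2, ← Algebra.TensorProduct.tmul_mul_tmul, hmul,
          TensorProduct.tensorTensorTensorComm_tmul, Algebra.TensorProduct.one_def]
end

section
/- Let A and B be associative unital k-algebras. The map sending a pair (Δ_A, Δ_B) ∈ E_A × E_B to the coproduct Δ := (ι_A ⊗ ι_A) ∘ Δ_A ∘ π_A + (ι_B ⊗ ι_B) ∘ Δ_B ∘ π_B on the product algebra A × B is a k-linear bijection E_A × E_B → E_{A×B}. In particular Frobdim(A × B) = Frobdim(A) + Frobdim(B). -/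
open TensorProduct

/-- The Frobenius space of an algebra. -/
def FrobeniusSpace (k A : Type*) [Field k] [Ring A] [Algebra k A] :
    Submodule k (A →ₗ[k] A ⊗[k] A) where
  carrier := {Δ | IsNearlyFrobenius k A Δ}
  add_mem' := by
    intro Δ₁ Δ₂ h₁ h₂ a b
    refine ⟨?_, ?_⟩
    · simp only [LinearMap.add_apply, (h₁ a b).1, (h₂ a b).1, mul_add]
    · simp only [LinearMap.add_apply, (h₁ a b).2, (h₂ a b).2, add_mul]
  zero_mem' := by
    intro a b
    simp
  smul_mem' := by
    intro c Δ h a b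
    refine ⟨?_, ?_⟩
    · simp only [LinearMap.smul_apply, (h a b).1, Algebra.mul_smul_comm]
    · simp only [LinearMap.smul_apply, (h a b).2, Algebra.smul_mul_assoc]

universe u v

section Helpers

variable {k A B : Type*} [Field k] [Ring A] [Algebra k A] [Ring B] [Algebra k B]

theorem nf_transport (f : A →ₗ[k] B) (Δ : A →ₗ[k] A ⊗[k] A)
    (h : IsNearlyFrobenius k A Δ) (p : B →ₗ[k] A) (hp : ∀ x y, p (x * y) = p x * p y)
    (h1 : ∀ b a, f (p b * a) = b * f a) (h2 : ∀ b a, f (a * p b) = f a * b) :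
    IsNearlyFrobenius k B (TensorProduct.map f f ∘ₗ Δ ∘ₗ p) := by
  have l1 : ∀ (b : B) (x : A ⊗[k] A), TensorProduct.map f f ((p b ⊗ₜ[k] (1 : A)) * x) =
      (b ⊗ₜ[k] (1 : B)) * TensorProduct.map f f x := by
    intro b x
    induction x with
    | zero => simp
    | tmul x y => simp [h1]
    | add x y hx hy => simp only [mul_add, map_add, hx, hy]
  have l2 : ∀ (b : B) (x : A ⊗[k] A), TensorProduct.map f f (x * ((1 : A) ⊗ₜ[k] p b)) =
      TensorProduct.map f f x * ((1 : B) ⊗ₜ[k] b) := by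
    intro b x
    induction x with
    | zero => simp
    | tmul x y => simp [h2]
    | add x y hx hy => simp only [add_mul, map_add, hx, hy]
  intro a b
  constructor
  · simp only [LinearMap.comp_apply, hp, (h _ _).1, l1]
  · simp only [LinearMap.comp_apply, hp, (h _ _).2, l2]

/-- restriction to a factor -/
theorem nf_restrict (p : B →ₗ[k] A) (i : A →ₗ[k] B) (Δ : B →ₗ[k] B ⊗[k] B)
    (h : IsNearlyFrobenius k B Δ) (hp : ∀ x y, p (x * y) = p x * p y)
    (hi : ∀ x y, i (x * y) = i x * i y) (hpi : ∀ x, p (i x) = x) :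
    IsNearlyFrobenius k A (TensorProduct.map p p ∘ₗ Δ ∘ₗ i) :=
  nf_transport p Δ h i hi (by intro b a; rw [hp, hpi]) (by intro b a; rw [hp, hpi])

theorem nf_corner (Δ : B →ₗ[k] B ⊗[k] B) (h : IsNearlyFrobenius k B Δ) (e : B)
    (q : B →ₗ[k] B) (h1 : ∀ x, q x = e * x) (h2 : ∀ x, q x = x * e) (b : B) (hb : q b = b) :
    TensorProduct.map q q (Δ b) = Δ b := by
  have l : ∀ x : B ⊗[k] B, TensorProduct.map q q x =
      (e ⊗ₜ[k] (1 : B)) * x * ((1 : B) ⊗ₜ[k] e) := by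
    intro x
    induction x with
    | zero => simp
    | tmul x y =>
      rw [TensorProduct.map_tmul, h1 x, h2 y]
      simp
    | add x y hx hy => simp only [mul_add, add_mul, map_add, hx, hy]
  rw [l, ← (h _ _).1, ← h1, hb, ← (h _ _).2, ← h2, hb]

theorem nf_inl (Δ : A →ₗ[k] A ⊗[k] A) (h : IsNearlyFrobenius k A Δ) :
    IsNearlyFrobenius k (A × B) (TensorProduct.map (LinearMap.inl k A B) (LinearMap.inl k A B) ∘ₗ
      Δ ∘ₗ LinearMap.fst k A B) :=
  nf_transport _ Δ h _ (by simp) (by intro b a; ext <;> simp) (by intro b a; ext <;> simp)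

theorem nf_inr (Δ : B →ₗ[k] B ⊗[k] B) (h : IsNearlyFrobenius k B Δ) :
    IsNearlyFrobenius k (A × B) (TensorProduct.map (LinearMap.inr k A B) (LinearMap.inr k A B) ∘ₗ
      Δ ∘ₗ LinearMap.snd k A B) :=
  nf_transport _ Δ h _ (by simp) (by intro b a; ext <;> simp) (by intro b a; ext <;> simp)

variable (k A B) in
/-- the direct sum map -/
def nfProd : (FrobeniusSpace k A × FrobeniusSpace k B) →ₗ[k] FrobeniusSpace k (A × B) where
  toFun x := ⟨TensorProduct.map (LinearMap.inl k A B) (LinearMap.inl k A B) ∘ₗ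
            (x.1 : A →ₗ[k] A ⊗[k] A) ∘ₗ LinearMap.fst k A B +
          TensorProduct.map (LinearMap.inr k A B) (LinearMap.inr k A B) ∘ₗ
            (x.2 : B →ₗ[k] B ⊗[k] B) ∘ₗ LinearMap.snd k A B,
      (FrobeniusSpace k (A × B)).add_mem (nf_inl _ x.1.2) (nf_inr _ x.2.2)⟩
  map_add' x y := by
    apply Subtype.ext
    apply LinearMap.ext
    intro z
    simp only [LinearMap.add_apply, LinearMap.comp_apply, Prod.fst_add, Prod.snd_add,
      Submodule.coe_add, map_add]
    abel
  map_smul' c x := by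
    apply Subtype.ext
    apply LinearMap.ext
    intro z
    simp only [LinearMap.add_apply, LinearMap.comp_apply, Prod.smul_fst, Prod.smul_snd,
      Submodule.coe_smul, LinearMap.smul_apply, map_smul, smul_add, RingHom.id_apply]

theorem nfProd_bij : Function.Bijective (nfProd k A B) := by
  rw [Function.bijective_iff_has_inverse]
  refine ⟨fun Δ => (⟨TensorProduct.map (LinearMap.fst k A B) (LinearMap.fst k A B) ∘ₗ
      (Δ : A × B →ₗ[k] (A × B) ⊗[k] (A × B)) ∘ₗ LinearMap.inl k A B,
        nf_restrict _ _ _ Δ.2 (by simp) (by intro b a; ext <;> simp) (by simp)⟩,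
      ⟨TensorProduct.map (LinearMap.snd k A B) (LinearMap.snd k A B) ∘ₗ
      (Δ : A × B →ₗ[k] (A × B) ⊗[k] (A × B)) ∘ₗ LinearMap.inr k A B,
        nf_restrict _ _ _ Δ.2 (by simp) (by intro b a; ext <;> simp) (by simp)⟩), ?_, ?_⟩
  · rintro ⟨ΔA, ΔB⟩
    refine Prod.ext (Subtype.ext (LinearMap.ext fun z => ?_))
      (Subtype.ext (LinearMap.ext fun z => ?_))
    · simp only [nfProd, LinearMap.coe_mk, AddHom.coe_mk, LinearMap.comp_apply,
        LinearMap.add_apply, map_add, TensorProduct.map_map]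
      simp [LinearMap.fst_comp_inl, LinearMap.snd_comp_inr, LinearMap.fst_comp_inr, LinearMap.snd_comp_inl]
    · simp only [nfProd, LinearMap.coe_mk, AddHom.coe_mk, LinearMap.comp_apply,
        LinearMap.add_apply, map_add, TensorProduct.map_map]
      simp [LinearMap.fst_comp_inl, LinearMap.snd_comp_inr, LinearMap.fst_comp_inr, LinearMap.snd_comp_inl]
  · intro Δ
    refine Subtype.ext (LinearMap.ext fun z => ?_)
    have e1 := nf_corner _ Δ.2 ((1 : A), (0 : B)) (LinearMap.inl k A B ∘ₗ LinearMap.fst k A B)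
      (by intro x; ext <;> simp) (by intro x; ext <;> simp) (z.1, 0) (by simp)
    have e2 := nf_corner _ Δ.2 ((0 : A), (1 : B)) (LinearMap.inr k A B ∘ₗ LinearMap.snd k A B)
      (by intro x; ext <;> simp) (by intro x; ext <;> simp) (0, z.2) (by simp)
    rw [TensorProduct.map_comp] at e1 e2
    have e3 : z = (z.1, 0) + (0, z.2) := by ext <;> simp
    conv_rhs => rw [e3, map_add, ← e1, ← e2]
    rfl

theorem nf_rank_prod (k : Type u) (M N : Type v) [Field k] [iM : AddCommMonoid M] [Module k M]
    [iN : AddCommMonoid N] [Module k N] :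
    Module.rank k (M × N) = Module.rank k M + Module.rank k N := by
  haveI : Module.Free k M :=
    @Module.Free.of_divisionRing k M _ (Module.addCommMonoidToAddCommGroup k) _
  haveI : Module.Free k N :=
    @Module.Free.of_divisionRing k N _ (Module.addCommMonoidToAddCommGroup k) _
  letI gM : AddCommGroup M := Module.addCommMonoidToAddCommGroup k
  letI gN : AddCommGroup N := Module.addCommMonoidToAddCommGroup k
  exact rank_prod'

end Helpers

/-- `(Δ_A, Δ_B) ↦ (ι_A ⊗ ι_A) ∘ Δ_A ∘ π_A + (ι_B ⊗ ι_B) ∘ Δ_B ∘ π_B`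
is a `k`-linear bijection `E_A × E_B ≃ E_{A×B}`; in particular
`Frobdim (A × B) = Frobdim A + Frobdim B`. -/
theorem frobeniusSpace_prod (k : Type u) (A B : Type v) [Field k]
    [Ring A] [Algebra k A] [Ring B] [Algebra k B] :
    ∃ e : (FrobeniusSpace k A × FrobeniusSpace k B) ≃ₗ[k] FrobeniusSpace k (A × B),
      (∀ (ΔA : FrobeniusSpace k A) (ΔB : FrobeniusSpace k B),
        (e (ΔA, ΔB) : A × B →ₗ[k] (A × B) ⊗[k] (A × B)) =
          TensorProduct.map (LinearMap.inl k A B) (LinearMap.inl k A B) ∘ₗ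
            (ΔA : A →ₗ[k] A ⊗[k] A) ∘ₗ LinearMap.fst k A B +
          TensorProduct.map (LinearMap.inr k A B) (LinearMap.inr k A B) ∘ₗ
            (ΔB : B →ₗ[k] B ⊗[k] B) ∘ₗ LinearMap.snd k A B) ∧
      Module.rank k (FrobeniusSpace k (A × B)) =
        Module.rank k (FrobeniusSpace k A) + Module.rank k (FrobeniusSpace k B) := by
  refine ⟨LinearEquiv.ofBijective (nfProd k A B) nfProd_bij, fun _ _ => rfl, ?_⟩
  rw [← (LinearEquiv.ofBijective (nfProd k A B) nfProd_bij).rank_eq]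
  exact nf_rank_prod k _ _
end

section
/- Let A and B be finite-dimensional associative unital k-algebras. The k-linear map E_A ⊗[k] E_B → E_{A⊗B} induced by (Δ_A, Δ_B) ↦ τ ∘ (Δ_A ⊗ Δ_B), where τ : (A ⊗ A) ⊗ (B ⊗ B) → (A ⊗ B) ⊗ (A ⊗ B) is the middle-interchange isomorphism, is a linear bijection. In particular Frobdim(A ⊗[k] B) = Frobdim(A) · Frobdim(B). -/
open TensorProduct

universe u v

/-- The induced coproduct on a tensor product algebra. -/
noncomputable def tensorCoprod (k A B : Type*) [Field k]
    [Ring A] [Algebra k A] [Ring B] [Algebra k B]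
    (ΔA : A →ₗ[k] A ⊗[k] A) (ΔB : B →ₗ[k] B ⊗[k] B) :
    A ⊗[k] B →ₗ[k] (A ⊗[k] B) ⊗[k] (A ⊗[k] B) :=
  (TensorProduct.tensorTensorTensorComm k A A B B).toLinearMap ∘ₗ
    TensorProduct.map ΔA ΔB

theorem frobAux_mem_range {k V W A B V' W' : Type*} [Field k]
    [AddCommGroup V] [Module k V] [AddCommGroup W] [Module k W]
    [AddCommGroup A] [Module k A] [AddCommGroup B] [Module k B]
    [AddCommGroup V'] [Module k V'] [AddCommGroup W'] [Module k W']
    [FiniteDimensional k A] [FiniteDimensional k B]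
    (F : V →ₗ[k] A →ₗ[k] V') (G : W →ₗ[k] B →ₗ[k] W') (x : V ⊗[k] W)
    (hF : ∀ a, (F.flip a).rTensor W x = 0) (hG : ∀ b, (G.flip b).lTensor V x = 0) :
    ∃ y, TensorProduct.map (LinearMap.ker F).subtype (LinearMap.ker G).subtype y = x := by
  have h1 : F.rTensor W x = 0 := by
    apply (rTensorHomEquivHomRTensor k A V' W).injective
    rw [map_zero, rTensorHomEquivHomRTensor_apply]
    ext a
    rw [LinearMap.zero_apply, ← hF a]
    clear hF hG
    induction x with
    | zero => simp
    | tmul v w => simp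
    | add x y hx hy => simp only [map_add, LinearMap.add_apply, hx, hy]
  have h2 : G.lTensor V x = 0 := by
    apply (lTensorHomEquivHomLTensor k B V W').injective
    rw [map_zero, lTensorHomEquivHomLTensor_apply]
    ext b
    rw [LinearMap.zero_apply, ← hG b]
    clear hF hG h1
    induction x with
    | zero => simp
    | tmul v w => simp
    | add x y hx hy => simp only [map_add, LinearMap.add_apply, hx, hy]
  obtain ⟨y, rfl⟩ := (Module.Flat.rTensor_exact W (LinearMap.exact_subtype_ker_map F) x).1 h1
  have h3 : G.lTensor (LinearMap.ker F) y = 0 := by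
    apply Module.Flat.rTensor_preserves_injective_linearMap (M := B →ₗ[k] W')
      (LinearMap.ker F).subtype (LinearMap.ker F).injective_subtype
    rw [map_zero, ← h2, ← LinearMap.comp_apply, ← LinearMap.comp_apply,
      LinearMap.rTensor_comp_lTensor, LinearMap.lTensor_comp_rTensor]
  obtain ⟨z, rfl⟩ := (Module.Flat.lTensor_exact (LinearMap.ker F)
    (LinearMap.exact_subtype_ker_map G) y).1 h3
  refine ⟨z, ?_⟩
  rw [← LinearMap.comp_apply, LinearMap.rTensor_comp_lTensor]

/-- The defect of `x` from being the value at one of a coproduct. -/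
noncomputable def frobDefect (k A : Type*) [Field k] [Ring A] [Algebra k A] :
    A ⊗[k] A →ₗ[k] A →ₗ[k] A ⊗[k] A :=
  LinearMap.mk₂ k (fun x a => (a ⊗ₜ[k] (1 : A)) * x - x * ((1 : A) ⊗ₜ[k] a))
    (by intros; simp only [mul_add, add_mul]; abel)
    (by intros; simp only [mul_smul_comm, smul_mul_assoc, smul_sub])
    (by intros; simp only [TensorProduct.add_tmul, TensorProduct.tmul_add, mul_add, add_mul]; abel)
    (by intros; simp only [← TensorProduct.smul_tmul', TensorProduct.tmul_smul, mul_smul_comm,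
          smul_mul_assoc, smul_sub])

theorem frobDefect_apply (k A : Type*) [Field k] [Ring A] [Algebra k A] (x : A ⊗[k] A) (a : A) :
    frobDefect k A x a = (a ⊗ₜ[k] (1 : A)) * x - x * ((1 : A) ⊗ₜ[k] a) := rfl

/-- Evaluation at one. -/
noncomputable def frobEv (k A : Type*) [Field k] [Ring A] [Algebra k A] :
    FrobeniusSpace k A →ₗ[k] LinearMap.ker (frobDefect k A) :=
  LinearMap.codRestrict _ ((LinearMap.applyₗ (1 : A)) ∘ₗ (FrobeniusSpace k A).subtype) (by
    intro Δ
    rw [LinearMap.mem_ker]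
    ext a
    have h1 := (Δ.2 a 1).1
    have h2 := (Δ.2 1 a).2
    rw [mul_one] at h1
    rw [one_mul] at h2
    rw [frobDefect_apply]
    change (a ⊗ₜ[k] (1 : A)) * Δ.1 1 - Δ.1 1 * ((1 : A) ⊗ₜ[k] a) = 0
    rw [← h1, ← h2, sub_self])

theorem frobEv_coe (k A : Type*) [Field k] [Ring A] [Algebra k A] (Δ : FrobeniusSpace k A) :
    (frobEv k A Δ : A ⊗[k] A) = Δ.1 1 := rfl

theorem frobEv_injective (k A : Type*) [Field k] [Ring A] [Algebra k A] :
    Function.Injective (frobEv k A) := by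
  intro Δ Δ' h
  have h' : Δ.1 1 = Δ'.1 1 := by rw [← frobEv_coe, ← frobEv_coe, h]
  apply Subtype.ext
  apply LinearMap.ext
  intro a
  have h1 := (Δ.2 a 1).1
  have h2 := (Δ'.2 a 1).1
  rw [mul_one] at h1 h2
  rw [h1, h2, h']

theorem frobEv_surjective (k A : Type*) [Field k] [Ring A] [Algebra k A] :
    Function.Surjective (frobEv k A) := by
  rintro ⟨x, hx⟩
  have hx' : ∀ a : A, (a ⊗ₜ[k] (1 : A)) * x = x * ((1 : A) ⊗ₜ[k] a) := by
    intro a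
    rw [← sub_eq_zero, ← frobDefect_apply, LinearMap.mem_ker.1 hx, LinearMap.zero_apply]
  refine ⟨⟨(LinearMap.mulRight k x) ∘ₗ
    (Algebra.TensorProduct.includeLeft : A →ₐ[k] A ⊗[k] A).toLinearMap, ?_⟩, ?_⟩
  · intro a b
    constructor
    · simp [← mul_assoc]
    · simp only [LinearMap.comp_apply, AlgHom.toLinearMap_apply, LinearMap.mulRight_apply, map_mul,
        Algebra.TensorProduct.includeLeft_apply, mul_assoc, hx' b]
  · apply Subtype.ext
    rw [frobEv_coe]
    simp [← Algebra.TensorProduct.one_def]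

section
variable (k A B : Type*) [Field k] [Ring A] [Algebra k A] [Ring B] [Algebra k B]

theorem frobTau_mul (x y : (A ⊗[k] A) ⊗[k] (B ⊗[k] B)) :
    TensorProduct.tensorTensorTensorComm k A A B B (x * y) =
      TensorProduct.tensorTensorTensorComm k A A B B x *
      TensorProduct.tensorTensorTensorComm k A A B B y :=
  map_mul (Algebra.TensorProduct.tensorTensorTensorComm k k k k A A B B) x y

theorem tensorCoprod_mem (ΔA : FrobeniusSpace k A) (ΔB : FrobeniusSpace k B) :
    tensorCoprod k A B ΔA.1 ΔB.1 ∈ FrobeniusSpace k (A ⊗[k] B) := by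
  intro x y
  constructor
  · induction x with
    | zero => simp
    | add x x' hx hx' => simp only [add_mul, map_add, TensorProduct.add_tmul, hx, hx']
    | tmul a b =>
      induction y with
      | zero => simp
      | add x x' hx hx' => simp only [mul_add, map_add, hx, hx']
      | tmul a' b' =>
        have h : (a ⊗ₜ[k] b) ⊗ₜ[k] (1 : A ⊗[k] B) =
          TensorProduct.tensorTensorTensorComm k A A B B ((a ⊗ₜ 1) ⊗ₜ (b ⊗ₜ 1)) := rfl
        rw [h]
        simp only [tensorCoprod, LinearMap.comp_apply, LinearEquiv.coe_coe,
          Algebra.TensorProduct.tmul_mul_tmul, TensorProduct.map_tmul]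
        rw [← frobTau_mul, Algebra.TensorProduct.tmul_mul_tmul, (ΔA.2 a a').1, (ΔB.2 b b').1]
  · induction x with
    | zero => simp
    | add x x' hx hx' => simp only [add_mul, map_add, hx, hx']
    | tmul a b =>
      induction y with
      | zero => simp
      | add x x' hx hx' => simp only [mul_add, map_add, TensorProduct.tmul_add, hx, hx']
      | tmul a' b' =>
        have h : (1 : A ⊗[k] B) ⊗ₜ[k] (a' ⊗ₜ[k] b') =
          TensorProduct.tensorTensorTensorComm k A A B B ((1 ⊗ₜ a') ⊗ₜ (1 ⊗ₜ b')) := rfl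
        rw [h]
        simp only [tensorCoprod, LinearMap.comp_apply, LinearEquiv.coe_coe,
          Algebra.TensorProduct.tmul_mul_tmul, TensorProduct.map_tmul]
        rw [← frobTau_mul, Algebra.TensorProduct.tmul_mul_tmul, (ΔA.2 a a').2, (ΔB.2 b b').2]

/-- The induced map on Frobenius spaces. -/
noncomputable def frobMap :
    FrobeniusSpace k A ⊗[k] FrobeniusSpace k B →ₗ[k] FrobeniusSpace k (A ⊗[k] B) :=
  TensorProduct.lift (LinearMap.mk₂ k
    (fun ΔA ΔB => ⟨tensorCoprod k A B ΔA.1 ΔB.1, tensorCoprod_mem k A B ΔA ΔB⟩)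
    (by intros; apply Subtype.ext
        simp [tensorCoprod, TensorProduct.map_add_left, LinearMap.comp_add])
    (by intros; apply Subtype.ext
        simp [tensorCoprod, TensorProduct.map_smul_left, LinearMap.comp_smul])
    (by intros; apply Subtype.ext
        simp [tensorCoprod, TensorProduct.map_add_right, LinearMap.comp_add])
    (by intros; apply Subtype.ext
        simp [tensorCoprod, TensorProduct.map_smul_right, LinearMap.comp_smul]))

theorem frobMap_tmul (ΔA : FrobeniusSpace k A) (ΔB : FrobeniusSpace k B) :
    (frobMap k A B (ΔA ⊗ₜ ΔB)).1 = tensorCoprod k A B ΔA.1 ΔB.1 := rfl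

theorem frobMap_ev (z : FrobeniusSpace k A ⊗[k] FrobeniusSpace k B) :
    (frobMap k A B z).1 1 = TensorProduct.tensorTensorTensorComm k A A B B
      (TensorProduct.map (LinearMap.ker (frobDefect k A)).subtype
        (LinearMap.ker (frobDefect k B)).subtype
        (TensorProduct.map (frobEv k A) (frobEv k B) z)) := by
  induction z with
  | zero => simp
  | add x y hx hy => simp only [map_add, Submodule.coe_add, LinearMap.add_apply, hx, hy]
  | tmul a b => rfl

theorem frobSpace_free : Module.Free k (FrobeniusSpace k A) :=
  Module.Free.of_divisionRing k (FrobeniusSpace k A)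

theorem frobMap_injective : Function.Injective (frobMap k A B) := by
  have := frobSpace_free k A
  have := frobSpace_free k B
  intro z z' h
  have h' : (frobMap k A B z).1 1 = (frobMap k A B z').1 1 := by rw [h]
  rw [frobMap_ev, frobMap_ev] at h'
  have h2 := (TensorProduct.tensorTensorTensorComm k A A B B).injective h'
  have h3 := TensorProduct.map_injective_of_flat_flat _ _
    (LinearMap.ker (frobDefect k A)).injective_subtype
    (LinearMap.ker (frobDefect k B)).injective_subtype h2
  exact TensorProduct.map_injective_of_flat_flat _ _
    (frobEv_injective k A) (frobEv_injective k B) h3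

theorem frobMap_surjective [FiniteDimensional k A] [FiniteDimensional k B] :
    Function.Surjective (frobMap k A B) := by
  intro Δ
  have hΔ := LinearMap.mem_ker.1 (frobEv k _ Δ).2
  rw [frobEv_coe] at hΔ
  obtain ⟨x, hx⟩ := (TensorProduct.tensorTensorTensorComm k A A B B).surjective (Δ.1 1)
  rw [← hx] at hΔ
  obtain ⟨y, hy⟩ := frobAux_mem_range (frobDefect k A) (frobDefect k B) x (by
    intro a
    have h : ((frobDefect k A).flip a).rTensor (B ⊗[k] B) x =
        ((a ⊗ₜ[k] (1 : A)) ⊗ₜ[k] ((1 : B) ⊗ₜ[k] (1 : B))) * x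
        - x * (((1 : A) ⊗ₜ[k] a) ⊗ₜ[k] ((1 : B) ⊗ₜ[k] (1 : B))) := by
      clear hx hΔ
      induction x with
      | zero => simp
      | add x y hx hy => simp only [map_add, mul_add, add_mul, hx, hy]; abel
      | tmul v w =>
        simp [frobDefect_apply, TensorProduct.sub_tmul, ← Algebra.TensorProduct.one_def]
    rw [h]
    apply (TensorProduct.tensorTensorTensorComm k A A B B).injective
    rw [map_sub, frobTau_mul, frobTau_mul, map_zero]
    exact LinearMap.congr_fun hΔ (a ⊗ₜ 1)) (by
    intro b
    have h : ((frobDefect k B).flip b).lTensor (A ⊗[k] A) x =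
        (((1 : A) ⊗ₜ[k] (1 : A)) ⊗ₜ[k] (b ⊗ₜ[k] (1 : B))) * x
        - x * (((1 : A) ⊗ₜ[k] (1 : A)) ⊗ₜ[k] ((1 : B) ⊗ₜ[k] b)) := by
      clear hx hΔ
      induction x with
      | zero => simp
      | add x y hx hy => simp only [map_add, mul_add, add_mul, hx, hy]; abel
      | tmul v w =>
        simp [frobDefect_apply, TensorProduct.tmul_sub, ← Algebra.TensorProduct.one_def]
    rw [h]
    apply (TensorProduct.tensorTensorTensorComm k A A B B).injective
    rw [map_sub, frobTau_mul, frobTau_mul, map_zero]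
    exact LinearMap.congr_fun hΔ (1 ⊗ₜ b))
  obtain ⟨z, rfl⟩ := TensorProduct.map_surjective
    (frobEv_surjective k A) (frobEv_surjective k B) y
  refine ⟨z, ?_⟩
  apply frobEv_injective
  apply Subtype.ext
  rw [frobEv_coe, frobEv_coe, frobMap_ev, hy, hx]

end

set_option maxHeartbeats 1000000 in
/-- for finite dimensional algebras `A`, `B`, the assignment
`(Δ_A, Δ_B) ↦ τ ∘ (Δ_A ⊗ Δ_B)` induces a `k`-linear bijection
`E_A ⊗ E_B ≃ E_{A ⊗ B}`; in particular
`Frobdim (A ⊗ B) = Frobdim A * Frobdim B`. -/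
theorem frobeniusSpace_tensor (k : Type u) (A B : Type v) [Field k]
    [Ring A] [Algebra k A] [Ring B] [Algebra k B]
    [FiniteDimensional k A] [FiniteDimensional k B] :
    ∃ e : (FrobeniusSpace k A ⊗[k] FrobeniusSpace k B) ≃ₗ[k] FrobeniusSpace k (A ⊗[k] B),
      (∀ (ΔA : FrobeniusSpace k A) (ΔB : FrobeniusSpace k B),
        (e (ΔA ⊗ₜ[k] ΔB)).val =
          tensorCoprod k A B ΔA.val ΔB.val) ∧
      Module.finrank k (FrobeniusSpace k (A ⊗[k] B)) =
        Module.finrank k (FrobeniusSpace k A) * Module.finrank k (FrobeniusSpace k B) := by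
  have := frobSpace_free k A
  have := frobSpace_free k B
  refine ⟨LinearEquiv.ofBijective (frobMap k A B)
    ⟨frobMap_injective k A B, frobMap_surjective k A B⟩, fun ΔA ΔB => rfl, ?_⟩
  rw [← Module.finrank_tensorProduct]
  exact (LinearEquiv.finrank_eq (LinearEquiv.ofBijective (frobMap k A B)
    ⟨frobMap_injective k A B, frobMap_surjective k A B⟩)).symm
end

section
/- Let k be an algebraically closed field and A a finite-dimensional semisimple k-algebra, so that by Artin–Wedderburn A ≅ M_{n_1}(k) × ⋯ × M_{n_r}(k). Then the Frobenius dimension of A equals Σ_{i=1}^{r} n_i², i.e. Frobdim A = dim_k A. -/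
open TensorProduct

theorem exists_frobForm (k A : Type*) [Field k] [IsAlgClosed k]
    [Ring A] [Algebra k A] [FiniteDimensional k A] [IsSemisimpleRing A] :
    ∃ l : A →ₗ[k] k, ∀ y : A, (∀ c, l (y * c) = 0) → y = 0 := by
  classical
  obtain ⟨n, d, _, ⟨e⟩⟩ := IsSemisimpleRing.exists_algEquiv_pi_matrix_of_isAlgClosed k A
  refine ⟨(∑ i, (Matrix.traceLinearMap (Fin (d i)) k k) ∘ₗ LinearMap.proj i) ∘ₗ
    e.toLinearMap, fun y h => ?_⟩
  apply e.injective
  rw [map_zero]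
  funext i
  refine Matrix.ext_iff_trace_mul_right.2 fun x => ?_
  have := h (e.symm (Pi.single i x))
  simp only [LinearMap.comp_apply, AlgEquiv.toLinearMap_apply, map_mul,
    AlgEquiv.apply_symm_apply, LinearMap.sum_apply, LinearMap.proj_apply, Pi.mul_apply,
    Matrix.traceLinearMap_apply] at this
  rw [Finset.sum_eq_single i] at this
  · simpa using this
  · intro j _ hj
    simp [Pi.single_eq_of_ne hj]
  · simp

theorem exists_frobMap (k A : Type*) [Field k] [Ring A] [Algebra k A] [FiniteDimensional k A]
    (l : A →ₗ[k] k) (hl : ∀ y : A, (∀ c, l (y * c) = 0) → y = 0) :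
    ∃ T : A ⊗[k] A ≃ₗ[k] (A →ₗ[k] A), ∀ x y c, T (x ⊗ₜ y) c = l (y * c) • x := by
  let p : A →ₗ[k] Module.Dual k A := (LinearMap.mul k A).compr₂ l
  have hp : Function.Injective p := by
    refine (injective_iff_map_eq_zero p).2 fun y hy => hl y fun c => ?_
    exact LinearMap.congr_fun hy c
  let P : A ≃ₗ[k] Module.Dual k A :=
    LinearEquiv.ofInjectiveOfFinrankEq p hp (Subspace.dual_finrank_eq).symm
  refine ⟨(TensorProduct.comm k A A).trans
    ((TensorProduct.congr P (LinearEquiv.refl k A)).trans (dualTensorHomEquiv k A A)), ?_⟩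
  intro x y c
  rfl

theorem frobdim_of_form (k A : Type*) [Field k] [Ring A] [Algebra k A] [FiniteDimensional k A]
    (l : A →ₗ[k] k) (hl : ∀ y : A, (∀ c, l (y * c) = 0) → y = 0) :
    Module.finrank k (FrobeniusSpace k A) = Module.finrank k A := by
  obtain ⟨T, hT⟩ := exists_frobMap k A l hl
  have h1 : ∀ (a : A) (t : A ⊗[k] A) (c : A), T ((a ⊗ₜ 1) * t) c = a * T t c := by
    intro a t c
    induction t with
    | zero => simp
    | tmul x y => simp [hT]
    | add x y hx hy => simp [mul_add, hx, hy]
  have h2 : ∀ (a : A) (t : A ⊗[k] A) (c : A), T (t * (1 ⊗ₜ a)) c = T t (a * c) := by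
    intro a t c
    induction t with
    | zero => simp
    | tmul x y => simp [hT, mul_assoc]
    | add x y hx hy => simp [add_mul, hx, hy]
  let F : FrobeniusSpace k A →ₗ[k] A :=
    { toFun := fun D => T (D.1 1) 1
      map_add' := by intro D E; simp
      map_smul' := by intro r D; simp }
  refine (LinearEquiv.ofBijective F ⟨?_, ?_⟩).finrank_eq
  · intro D E hDE
    have hDE' : T (D.1 1) 1 = T (E.1 1) 1 := hDE
    have hc : ∀ (D : FrobeniusSpace k A) (c : A), T (D.1 1) c = c * T (D.1 1) 1 := by
      intro D c
      have a1 := h2 c (D.1 1) 1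
      have a2 := h1 c (D.1 1) 1
      rw [← (D.2 1 c).2] at a1
      rw [← (D.2 c 1).1] at a2
      simp only [mul_one, one_mul] at a1 a2
      rw [← a1, a2]
    have key : D.1 1 = E.1 1 := by
      apply T.injective
      ext c
      rw [hc D, hc E, hDE']
    apply Subtype.ext
    apply LinearMap.ext
    intro c
    have d := (D.2 c 1).1
    have e := (E.2 c 1).1
    rw [mul_one] at d e
    rw [d, e, key]
  · intro a
    obtain ⟨t, ht⟩ := T.surjective (LinearMap.mulRight k a)
    have comm : ∀ c : A, (c ⊗ₜ[k] (1 : A)) * t = t * (1 ⊗ₜ c) := by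
      intro c
      apply T.injective
      ext x
      rw [h1, h2, ht]
      simp [mul_assoc]
    refine ⟨⟨(LinearMap.mulRight k t) ∘ₗ ((TensorProduct.mk k A A).flip 1), ?_⟩, ?_⟩
    · intro b c
      have e1 : ((b * c) ⊗ₜ[k] (1 : A)) * t = (b ⊗ₜ 1) * ((c ⊗ₜ 1) * t) := by
        rw [← mul_assoc]; simp
      refine ⟨e1, ?_⟩
      refine e1.trans ?_
      change _ = (b ⊗ₜ[k] (1 : A)) * t * _
      rw [comm c, mul_assoc]
    · change T (((1 : A) ⊗ₜ[k] (1 : A)) * t) 1 = a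
      rw [h1, ht]
      simp

/-- over an algebraically closed field, the Frobenius dimension of a
finite dimensional semisimple algebra equals its dimension (which by
Artin--Wedderburn is `∑ nᵢ²`). -/
theorem frobdim_of_semisimple (k A : Type*) [Field k] [IsAlgClosed k]
    [Ring A] [Algebra k A] [FiniteDimensional k A] [IsSemisimpleRing A] :
    Module.finrank k (FrobeniusSpace k A) = Module.finrank k A := by
  obtain ⟨l, hl⟩ := exists_frobForm k A
  exact frobdim_of_form k A l hl
end

section
/- Let G be a finite cyclic group of order n and k a field. Then the Frobenius dimension of the group algebra k[G] equals n, i.e. Frobdim(k[G]) = |G|. -/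
open TensorProduct

section aux
variable {k G : Type*} [Field k] [Group G]

/-- Coefficient of the identity in the left factor. -/
noncomputable def nfP (k G : Type*) [Field k] [Group G] :
    MonoidAlgebra k G ⊗[k] MonoidAlgebra k G →ₗ[k] MonoidAlgebra k G :=
  (TensorProduct.lid k _).toLinearMap ∘ₗ
    LinearMap.rTensor _ ((MonoidAlgebra.basis G k).coord 1)

lemma nfP_tmul (a b : MonoidAlgebra k G) : nfP k G (a ⊗ₜ b) = a.coeff 1 • b := by
  simp [nfP]
  rfl

lemma nfP_mul (u : MonoidAlgebra k G ⊗[k] MonoidAlgebra k G) (b : MonoidAlgebra k G) :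
    nfP k G (u * (1 ⊗ₜ b)) = nfP k G u * b := by
  induction u with
  | zero => simp
  | add x y hx hy => simp only [add_mul, map_add, hx, hy]
  | tmul x y => simp [nfP_tmul]

lemma nf_sum [Fintype G] (a : MonoidAlgebra k G) :
    ∑ g : G, a.coeff g • MonoidAlgebra.single g (1 : k) = a := by
  have := (MonoidAlgebra.basis G k).sum_repr a
  simp only [MonoidAlgebra.basis_apply] at this
  exact this

lemma nf_recon [Fintype G] (u : MonoidAlgebra k G ⊗[k] MonoidAlgebra k G) :
    u = ∑ g : G, MonoidAlgebra.single g (1 : k) ⊗ₜ[k]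
      nfP k G ((MonoidAlgebra.single g⁻¹ (1 : k) ⊗ₜ[k] 1) * u) := by
  induction u with
  | zero => simp
  | add x y hx hy =>
    simp only [mul_add, map_add, TensorProduct.tmul_add, Finset.sum_add_distrib]
    rw [← hx, ← hy]
  | tmul x y =>
    conv_lhs => rw [← nf_sum x, TensorProduct.sum_tmul]
    refine Finset.sum_congr rfl fun g _ => ?_
    rw [TensorProduct.smul_tmul]
    simp [nfP_tmul]

/-- The Casimir element attached to `a`. -/
noncomputable def nfU [Fintype G] (a : MonoidAlgebra k G) :
    MonoidAlgebra k G ⊗[k] MonoidAlgebra k G :=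
  ∑ g : G, MonoidAlgebra.single g (1 : k) ⊗ₜ[k] (a * MonoidAlgebra.single g⁻¹ (1 : k))

lemma nfU_comm [Fintype G] (a x : MonoidAlgebra k G) :
    (x ⊗ₜ[k] 1) * nfU a = nfU a * (1 ⊗ₜ[k] x) := by
  rw [← nf_sum x]
  simp only [TensorProduct.sum_tmul, TensorProduct.tmul_sum, Finset.sum_mul, Finset.mul_sum]
  refine Finset.sum_congr rfl fun h _ => ?_
  simp only [← TensorProduct.smul_tmul', TensorProduct.tmul_smul, smul_mul_assoc, mul_smul_comm]
  congr 1
  simp only [nfU, Finset.sum_mul, Finset.mul_sum, Algebra.TensorProduct.tmul_mul_tmul, one_mul,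
    mul_one, mul_assoc, MonoidAlgebra.single_mul_single]
  refine Fintype.sum_equiv (Equiv.mulLeft h) _ _ fun g => ?_
  simp

lemma nfP_U [Fintype G] (a : MonoidAlgebra k G) : nfP k G (nfU a) = a := by
  classical
  simp only [nfU, map_sum, nfP_tmul]
  rw [Finset.sum_eq_single 1]
  · simp [← MonoidAlgebra.one_def]
  · intro b _ hb
    simp [hb]
  · simp

lemma nf_bij [Fintype G] : Function.Bijective
    ((nfP k G ∘ₗ LinearMap.applyₗ (1 : MonoidAlgebra k G)) ∘ₗ
      (FrobeniusSpace k (MonoidAlgebra k G)).subtype) := by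
  constructor
  · rw [injective_iff_map_eq_zero]
    rintro ⟨Δ, hΔ⟩ h
    replace h : nfP k G (Δ 1) = 0 := h
    have h1 : Δ 1 = 0 := by
      rw [nf_recon (Δ 1)]
      refine Finset.sum_eq_zero fun g _ => ?_
      rw [← (hΔ _ 1).1, mul_one, ← one_mul (MonoidAlgebra.single g⁻¹ (1 : k)), (hΔ 1 _).2,
        nfP_mul, h, zero_mul, TensorProduct.tmul_zero]
    ext1
    apply LinearMap.ext
    intro x
    have := (hΔ x 1).1
    rw [mul_one, h1, mul_zero] at this
    exact this
  · intro a
    refine ⟨⟨LinearMap.mulRight k (nfU a) ∘ₗ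
      (Algebra.TensorProduct.includeLeft : MonoidAlgebra k G →ₐ[k] _).toLinearMap, ?_⟩, ?_⟩
    · intro x y
      have e : ∀ z, (LinearMap.mulRight k (nfU a) ∘ₗ
        (Algebra.TensorProduct.includeLeft : MonoidAlgebra k G →ₐ[k]
          MonoidAlgebra k G ⊗[k] MonoidAlgebra k G).toLinearMap) z = (z ⊗ₜ[k] 1) * nfU a :=
        fun z => rfl
      have e2 : ((x * y) ⊗ₜ[k] (1 : MonoidAlgebra k G)) = (x ⊗ₜ[k] 1) * (y ⊗ₜ[k] 1) := by
        simp
      rw [e, e, e, e2, mul_assoc]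
      refine ⟨rfl, ?_⟩
      rw [nfU_comm a y, mul_assoc]
    · change nfP k G (((1 : MonoidAlgebra k G) ⊗ₜ[k] 1) * nfU a) = a
      rw [← Algebra.TensorProduct.one_def, one_mul, nfP_U]

end aux

/-- the Frobenius dimension of the group algebra of a finite cyclic
group equals the order of the group. -/
theorem frobdim_monoidAlgebra_cyclic (k G : Type*) [Field k] [Group G] [Fintype G]
    [IsCyclic G] :
    Module.finrank k (FrobeniusSpace k (MonoidAlgebra k G)) = Fintype.card G := by
  rw [(LinearEquiv.ofBijective _ (nf_bij (k := k) (G := G))).finrank_eq]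
  exact Module.finrank_eq_card_basis (MonoidAlgebra.basis G k)
end

section
/- Let G be a finite abelian group and k a field. Then the Frobenius dimension of the group algebra k[G] equals the order of G: Frobdim(k[G]) = |G|. -/
open TensorProduct

section FrobAux
variable (k G : Type*) [Field k] [CommGroup G] [Fintype G]

local notation "AA" => MonoidAlgebra k G

noncomputable def frobOm : (AA) ⊗[k] (AA) :=
  ∑ g : G, (MonoidAlgebra.of k G g) ⊗ₜ[k] (MonoidAlgebra.of k G g⁻¹)

theorem frobOm_comm (x : AA) :
    (x ⊗ₜ[k] (1 : AA)) * frobOm k G = frobOm k G * ((1 : AA) ⊗ₜ[k] x) := by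
  induction x using MonoidAlgebra.induction_on with
  | of h =>
    unfold frobOm
    rw [Finset.mul_sum, Finset.sum_mul]
    refine Fintype.sum_equiv (Equiv.mulLeft h) _ _ fun g => ?_
    simp only [Algebra.TensorProduct.tmul_mul_tmul, ← map_mul, one_mul, mul_one,
      Equiv.coe_mulLeft]
    congr 2
    group
  | add a b ha hb => rw [add_tmul, tmul_add, add_mul, mul_add, ha, hb]
  | smul r a ha =>
    rw [← smul_tmul', tmul_smul, smul_mul_assoc, mul_smul_comm, ha]

noncomputable def frobPhi : (AA) ⊗[k] (AA) →ₗ[k] AA :=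
  TensorProduct.lift (LinearMap.mk₂ k (fun x y : AA => x.coeff 1 • y)
    (by intros; simp [add_smul]) (by intros; simp [mul_smul])
    (by intros; simp) (fun c m n => smul_comm _ _ _))

theorem frobPhi_tmul (x y : AA) : frobPhi k G (x ⊗ₜ y) = x.coeff 1 • y := by
  simp [frobPhi]

theorem frobPhi_mul (t : (AA) ⊗[k] (AA)) (a : AA) :
    frobPhi k G (t * ((1 : AA) ⊗ₜ[k] a)) = frobPhi k G t * a := by
  induction t with
  | zero => simp
  | tmul x y => simp [frobPhi_tmul]
  | add x y hx hy => rw [add_mul, map_add, map_add, add_mul, hx, hy]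

theorem frobPhi_om : frobPhi k G (frobOm k G) = 1 := by
  classical
  simp only [frobOm, map_sum, frobPhi_tmul]
  rw [Finset.sum_eq_single 1]
  · simp [MonoidAlgebra.one_def]
  · intro g _ hg
    simp [hg]
  · simp

theorem frob_recon (t : (AA) ⊗[k] (AA)) :
    t = ∑ g : G, (MonoidAlgebra.of k G g) ⊗ₜ[k]
      frobPhi k G (((MonoidAlgebra.of k G g⁻¹) ⊗ₜ[k] (1 : AA)) * t) := by
  classical
  induction t with
  | zero => simp
  | tmul x y =>
    simp only [Algebra.TensorProduct.tmul_mul_tmul, frobPhi_tmul, one_mul, ← smul_tmul,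
      ← sum_tmul]
    congr 1
    ext g
    simp
  | add x y hx hy =>
    conv_lhs => rw [hx, hy]
    simp only [mul_add, map_add, tmul_add, Finset.sum_add_distrib]

noncomputable def frobInv (c : AA) : FrobeniusSpace k (AA) :=
  ⟨LinearMap.mulRight k (frobOm k G * ((1 : AA) ⊗ₜ[k] c)) ∘ₗ
    (TensorProduct.mk k (AA) (AA)).flip 1, by
    intro a b
    have e : ((a * b) ⊗ₜ[k] (1 : AA)) = (a ⊗ₜ[k] (1 : AA)) * (b ⊗ₜ[k] (1 : AA)) := by simp
    simp only [LinearMap.comp_apply, LinearMap.flip_apply, TensorProduct.mk_apply,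
      LinearMap.mulRight_apply]
    refine ⟨by rw [e, mul_assoc], ?_⟩
    rw [e, mul_assoc, mul_assoc, ← mul_assoc (b ⊗ₜ[k] (1 : AA)), frobOm_comm, mul_assoc, mul_assoc]
    simp [mul_comm]⟩

noncomputable def frobEquiv : FrobeniusSpace k (AA) ≃ₗ[k] AA where
  toFun D := frobPhi k G (D.1 1)
  map_add' := by intros; simp
  map_smul' := by intros; simp
  invFun := frobInv k G
  left_inv := by
    rintro ⟨D, hD⟩
    apply Subtype.ext
    apply LinearMap.ext
    intro x
    have h1 : ∀ a : AA, (a ⊗ₜ[k] (1 : AA)) * D 1 = D 1 * ((1 : AA) ⊗ₜ[k] a) := by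
      intro a
      rw [← (hD a 1).1, ← (hD 1 a).2, mul_one, one_mul]
    have h2 : D x = (x ⊗ₜ[k] (1 : AA)) * D 1 := by
      rw [← (hD x 1).1, mul_one]
    rw [h2]
    simp only [frobInv, LinearMap.comp_apply, LinearMap.flip_apply, TensorProduct.mk_apply,
      LinearMap.mulRight_apply]
    congr 1
    conv_rhs => rw [frob_recon k G (D 1)]
    simp only [h1, frobPhi_mul, frobOm, Finset.sum_mul, Algebra.TensorProduct.tmul_mul_tmul,
      mul_one]
    simp only [mul_comm]
  right_inv := by
    intro c
    simp only [frobInv, LinearMap.comp_apply, LinearMap.flip_apply, TensorProduct.mk_apply,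
      LinearMap.mulRight_apply, ← Algebra.TensorProduct.one_def, one_mul]
    rw [frobPhi_mul, frobPhi_om, one_mul]

end FrobAux

/-- the Frobenius dimension of the group algebra of a finite abelian
group equals the order of the group. -/
theorem frobdim_monoidAlgebra_abelian (k G : Type*) [Field k] [CommGroup G] [Fintype G] :
    Module.finrank k (FrobeniusSpace k (MonoidAlgebra k G)) = Fintype.card G := by
  rw [(frobEquiv k G).finrank_eq]
  rw [Module.finrank_eq_card_basis (MonoidAlgebra.basis G k)]
end

section
/- Let A be an associative unital k-algebra. The evaluation map Δ ↦ Δ(1) is a k-linear bijection from the Frobenius space E_A (the space of nearly Frobenius coproducts on A) onto the space of invariants (A ⊗[k] A)^A = { x ∈ A ⊗[k] A : (a ⊗ 1)·x = x·(1 ⊗ a) for all a ∈ A }. -/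
open TensorProduct

/-- The space of invariants `(A ⊗ A)^A = H⁰(A, A ⊗ A)`. -/
def InvariantSpace (k A : Type*) [Field k] [Ring A] [Algebra k A] :
    Submodule k (A ⊗[k] A) where
  carrier := {x | ∀ a : A, (a ⊗ₜ[k] (1 : A)) * x = x * ((1 : A) ⊗ₜ[k] a)}
  add_mem' := by
    intro x y hx hy a
    simp only [mul_add, add_mul, hx a, hy a]
  zero_mem' := by
    intro a
    simp
  smul_mem' := by
    intro c x hx a
    simp only [Algebra.mul_smul_comm, Algebra.smul_mul_assoc, hx a]

/-- evaluation at `1` is a `k`-linear bijection from the Frobenius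
space `E_A` onto the space of invariants `(A ⊗ A)^A`. -/
theorem frobeniusSpace_equiv_invariants (k A : Type*) [Field k] [Ring A] [Algebra k A] :
    ∃ e : FrobeniusSpace k A ≃ₗ[k] InvariantSpace k A,
      ∀ Δ : FrobeniusSpace k A, (e Δ).val = Δ.val 1 := by
  have h1 : ∀ Δ : FrobeniusSpace k A, ∀ a : A,
      Δ.val a = (a ⊗ₜ[k] (1 : A)) * Δ.val 1 := by
    intro Δ a
    have h := (Δ.property a 1).1
    rwa [mul_one] at h
  have h2 : ∀ Δ : FrobeniusSpace k A, ∀ a : A,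
      Δ.val a = Δ.val 1 * ((1 : A) ⊗ₜ[k] a) := by
    intro Δ a
    have h := (Δ.property 1 a).2
    rwa [one_mul] at h
  let f : FrobeniusSpace k A →ₗ[k] InvariantSpace k A :=
    { toFun := fun Δ => ⟨Δ.val 1, fun a => (h1 Δ a).symm.trans (h2 Δ a)⟩
      map_add' := fun _ _ => rfl
      map_smul' := fun _ _ => rfl }
  have hf : Function.Bijective f := by
    constructor
    · intro Δ₁ Δ₂ h
      have h' : Δ₁.val 1 = Δ₂.val 1 := congrArg Subtype.val h
      apply Subtype.ext
      apply LinearMap.ext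
      intro a
      rw [h1 Δ₁ a, h1 Δ₂ a, h']
    · rintro ⟨x, hx⟩
      have hx' : ∀ a : A, (a ⊗ₜ[k] (1 : A)) * x = x * ((1 : A) ⊗ₜ[k] a) := hx
      let D : A →ₗ[k] A ⊗[k] A :=
        { toFun := fun a => (a ⊗ₜ[k] (1 : A)) * x
          map_add' := fun a b => by rw [TensorProduct.add_tmul, add_mul]
          map_smul' := fun c a => by
            rw [← TensorProduct.smul_tmul', Algebra.smul_mul_assoc]; rfl }
      have hD : ∀ a, D a = (a ⊗ₜ[k] (1 : A)) * x := fun _ => rfl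
      have hm : ∀ a b : A, ((a * b) ⊗ₜ[k] (1 : A)) = (a ⊗ₜ[k] (1 : A)) * (b ⊗ₜ[k] (1 : A)) := by
        intro a b
        rw [Algebra.TensorProduct.tmul_mul_tmul, one_mul]
      refine ⟨⟨D, fun a b => ⟨?_, ?_⟩⟩, ?_⟩
      · rw [hD, hD, hm, mul_assoc]
      · rw [hD, hD, hm, mul_assoc, hx' b, mul_assoc]
      · apply Subtype.ext
        change ((1 : A) ⊗ₜ[k] (1 : A)) * x = x
        rw [← Algebra.TensorProduct.one_def, one_mul]
  exact ⟨LinearEquiv.ofBijective f hf, fun _ => rfl⟩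
end

section
/- Let (A, Δ_A) and (B, Δ_B) be nearly Frobenius algebras over k whose coproducts Δ_A and Δ_B are normalized. Then the induced nearly Frobenius coproduct Δ := τ ∘ (Δ_A ⊗ Δ_B) on the tensor product algebra A ⊗[k] B, where τ : (A ⊗ A) ⊗ (B ⊗ B) → (A ⊗ B) ⊗ (A ⊗ B) is the middle-interchange isomorphism, is normalized, i.e. m_{A⊗B} ∘ Δ = id_{A⊗B}. -/
open TensorProduct

/-- if `Δ_A` and `Δ_B` are normalized nearly Frobenius coproducts,
then the induced nearly Frobenius coproduct `τ ∘ (Δ_A ⊗ Δ_B)` on the tensor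
product algebra `A ⊗[k] B` is normalized. -/
theorem tensorCoprod_normalized (k A B : Type*) [Field k]
    [Ring A] [Algebra k A] [Ring B] [Algebra k B]
    (ΔA : A →ₗ[k] A ⊗[k] A) (hΔA : IsNearlyFrobenius k A ΔA)
    (ΔB : B →ₗ[k] B ⊗[k] B) (hΔB : IsNearlyFrobenius k B ΔB)
    (hA : LinearMap.mul' k A ∘ₗ ΔA = LinearMap.id)
    (hB : LinearMap.mul' k B ∘ₗ ΔB = LinearMap.id) :
    LinearMap.mul' k (A ⊗[k] B) ∘ₗ
        ((TensorProduct.tensorTensorTensorComm k A A B B).toLinearMap ∘ₗ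
          TensorProduct.map ΔA ΔB) = LinearMap.id := by
  have key : LinearMap.mul' k (A ⊗[k] B) ∘ₗ
      (TensorProduct.tensorTensorTensorComm k A A B B).toLinearMap =
      TensorProduct.map (LinearMap.mul' k A) (LinearMap.mul' k B) := by
    ext a a' b b'
    simp
  rw [← LinearMap.comp_assoc, key, ← TensorProduct.map_comp, hA, hB, TensorProduct.map_id]
end

section
/- An associative unital k-algebra A admits a normalized nearly Frobenius coproduct if and only if A is separable over k, i.e. if and only if there exists a separability element e ∈ A ⊗[k] A satisfying m(e) = 1 and (a ⊗ 1)·e = e·(1 ⊗ a) for all a ∈ A. -/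
open TensorProduct

/-- an algebra admits a normalized nearly Frobenius coproduct if
and only if it is separable, i.e. admits a separability element. -/
theorem normalized_iff_separable (k A : Type*) [Field k] [Ring A] [Algebra k A] :
    (∃ Δ : A →ₗ[k] A ⊗[k] A, IsNearlyFrobenius k A Δ ∧
        LinearMap.mul' k A ∘ₗ Δ = LinearMap.id) ↔
      (∃ e : A ⊗[k] A, LinearMap.mul' k A e = 1 ∧
        ∀ a : A, (a ⊗ₜ[k] (1 : A)) * e = e * ((1 : A) ⊗ₜ[k] a)) := by
  have hm : ∀ (a : A) (x : A ⊗[k] A),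
      LinearMap.mul' k A ((a ⊗ₜ[k] (1 : A)) * x) = a * LinearMap.mul' k A x := by
    intro a x
    induction x using TensorProduct.induction_on with
    | zero => simp
    | tmul x y => simp [mul_assoc]
    | add x y hx hy => rw [mul_add, map_add, map_add, hx, hy, mul_add]
  constructor
  · rintro ⟨Δ, h, hn⟩
    refine ⟨Δ 1, LinearMap.congr_fun hn 1, fun a => ?_⟩
    have h1 := (h a 1).1
    have h2 := (h 1 a).2
    rw [mul_one] at h1
    rw [one_mul] at h2
    exact h1.symm.trans h2
  · rintro ⟨e, he, h⟩
    refine ⟨(LinearMap.mulRight k e) ∘ₗ ((TensorProduct.mk k A A).flip 1), ?_, ?_⟩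
    · intro a b
      have h1 : ((a * b) ⊗ₜ[k] (1 : A)) = (a ⊗ₜ[k] (1 : A)) * (b ⊗ₜ[k] (1 : A)) := by simp
      simp only [LinearMap.comp_apply, LinearMap.flip_apply, TensorProduct.mk_apply,
        LinearMap.mulRight_apply]
      rw [h1, mul_assoc]
      exact ⟨rfl, by rw [h b, mul_assoc]⟩
    · ext a
      simp only [LinearMap.comp_apply, LinearMap.flip_apply, TensorProduct.mk_apply,
        LinearMap.mulRight_apply, LinearMap.id_apply]
      rw [hm, he, mul_one]
end

section
/- Let A be an associative unital k-algebra. Then A admits a normalized nearly Frobenius coproduct if and only if every module over the enveloping algebra Aᵉ = A ⊗[k] Aᵐᵒᵖ is projective, if and only if Aᵉ is a semisimple ring (i.e. the category of A-bimodules is semisimple). -/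
open TensorProduct

universe u v

def HasSepElt (k S : Type*) [Field k] [Ring S] [Algebra k S] : Prop :=
  ∃ E : S ⊗[k] S, (∀ s : S, (s ⊗ₜ[k] (1 : S)) * E = E * ((1 : S) ⊗ₜ[k] s)) ∧
    LinearMap.mul' k S E = 1

theorem HasSepElt.isSemisimpleRing {k S : Type*} [Field k] [Ring S] [Algebra k S]
    (h : HasSepElt k S) : IsSemisimpleRing S := by
  obtain ⟨E, hE, hm⟩ := h
  refine (isSemisimpleModule_iff S S).2 ⟨fun I => ?_⟩
  obtain ⟨p, hp⟩ := LinearMap.exists_leftInverse_of_injective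
    (I.subtype.restrictScalars k) (by
      rw [LinearMap.ker_eq_bot]; exact Subtype.val_injective)
  have hp' : ∀ i : I, p (i : S) = i := fun i => DFunLike.congr_fun hp i
  let Φ : S → (S ⊗[k] S →ₗ[k] I) := fun m => TensorProduct.lift
    ((Algebra.lsmul k k I).toLinearMap.compl₂ (p ∘ₗ LinearMap.mulRight k m))
  have hΦ : ∀ m x y, Φ m (x ⊗ₜ y) = x • p (y * m) := fun m x y => by simp [Φ]
  have h1 : ∀ (s m : S) (X : S ⊗[k] S), Φ (s * m) X = Φ m (X * ((1 : S) ⊗ₜ[k] s)) := by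
    intro s m X
    induction X with
    | zero => simp
    | tmul x y => simp [hΦ, mul_assoc]
    | add x y hx hy => rw [map_add, add_mul, map_add, hx, hy]
  have h2 : ∀ (s m : S) (X : S ⊗[k] S), Φ m ((s ⊗ₜ[k] (1 : S)) * X) = s • Φ m X := by
    intro s m X
    induction X with
    | zero => simp
    | tmul x y => simp [hΦ, mul_smul]
    | add x y hx hy => rw [map_add, mul_add, map_add, hx, hy, smul_add]
  have h3 : ∀ (m m' : S) (X : S ⊗[k] S), Φ (m + m') X = Φ m X + Φ m' X := by
    intro m m' X
    induction X with
    | zero => simp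
    | tmul x y => simp [hΦ, mul_add]
    | add x y hx hy => rw [map_add, map_add, map_add, hx, hy]; abel
  have h4 : ∀ (i : I) (X : S ⊗[k] S), Φ i X = LinearMap.mul' k S X • i := by
    intro i X
    induction X with
    | zero => simp
    | tmul x y =>
      have : p (y * (i : S)) = y • i := hp' (y • i)
      simp [hΦ, this, mul_smul]
    | add x y hx hy => rw [map_add, map_add, hx, hy, add_smul]
  let P : S →ₗ[S] I :=
    { toFun := fun m => Φ m E
      map_add' := fun m m' => h3 m m' E
      map_smul' := fun s m => by
        simp only [smul_eq_mul, RingHom.id_apply]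
        rw [h1, ← hE, h2] }
  refine ⟨LinearMap.ker P, LinearMap.isCompl_of_proj (f := P) fun i => ?_⟩
  change Φ i E = i
  rw [h4, hm, one_smul]

theorem HasSepElt.mop {k S : Type*} [Field k] [Ring S] [Algebra k S]
    (h : HasSepElt k S) : HasSepElt k Sᵐᵒᵖ := by
  obtain ⟨E, hE, hm⟩ := h
  let o : S →ₗ[k] Sᵐᵒᵖ := (MulOpposite.opLinearEquiv k).toLinearMap
  let T : S ⊗[k] S →ₗ[k] Sᵐᵒᵖ ⊗[k] Sᵐᵒᵖ :=
    TensorProduct.map o o ∘ₗ (TensorProduct.comm k S S).toLinearMap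
  have hT : ∀ x y : S, T (x ⊗ₜ y) = MulOpposite.op y ⊗ₜ MulOpposite.op x := fun x y => by
    simp [T, o]
  refine ⟨T E, fun s => ?_, ?_⟩
  · have h1 : ∀ X : S ⊗[k] S, (s ⊗ₜ[k] (1 : Sᵐᵒᵖ)) * T X = T (X * (1 ⊗ₜ s.unop)) := by
      intro X
      induction X with
      | zero => simp
      | tmul x y => simp [hT]
      | add x y hx hy => rw [map_add, mul_add, add_mul, map_add, hx, hy]
    have h2 : ∀ X : S ⊗[k] S, T X * ((1 : Sᵐᵒᵖ) ⊗ₜ[k] s) = T ((s.unop ⊗ₜ 1) * X) := by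
      intro X
      induction X with
      | zero => simp
      | tmul x y => simp [hT]
      | add x y hx hy => rw [map_add, mul_add, add_mul, map_add, hx, hy]
    rw [h1, h2, hE]
  · have h1 : ∀ X : S ⊗[k] S,
        LinearMap.mul' k Sᵐᵒᵖ (T X) = MulOpposite.op (LinearMap.mul' k S X) := by
      intro X
      induction X with
      | zero => simp
      | tmul x y => simp [hT]
      | add x y hx hy => rw [map_add, map_add, map_add, hx, hy, MulOpposite.op_add]
    rw [h1, hm, MulOpposite.op_one]

theorem HasSepElt.tensor {k S R : Type*} [Field k] [Ring S] [Algebra k S] [Ring R] [Algebra k R]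
    (h : HasSepElt k S) (h' : HasSepElt k R) : HasSepElt k (S ⊗[k] R) := by
  obtain ⟨E, hE, hm⟩ := h
  obtain ⟨F, hF, hn⟩ := h'
  let T : (S ⊗[k] S) ⊗[k] (R ⊗[k] R) →ₐ[k] (S ⊗[k] R) ⊗[k] (S ⊗[k] R) :=
    (Algebra.TensorProduct.tensorTensorTensorComm k k k k S S R R).toAlgHom
  have hT : ∀ x y z w, T ((x ⊗ₜ y) ⊗ₜ (z ⊗ₜ w)) = (x ⊗ₜ z) ⊗ₜ (y ⊗ₜ w) := fun x y z w => by
    simp [T]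
  refine ⟨T (E ⊗ₜ F), fun s => ?_, ?_⟩
  · induction s with
    | zero => simp
    | tmul a b =>
      have e1 : ((a ⊗ₜ[k] b) ⊗ₜ[k] (1 : S ⊗[k] R)) = T ((a ⊗ₜ 1) ⊗ₜ (b ⊗ₜ 1)) := by
        rw [hT]; rfl
      have e2 : ((1 : S ⊗[k] R) ⊗ₜ[k] (a ⊗ₜ[k] b)) = T ((1 ⊗ₜ a) ⊗ₜ (1 ⊗ₜ b)) := by
        rw [hT]; rfl
      rw [e1, e2, ← map_mul, ← map_mul, Algebra.TensorProduct.tmul_mul_tmul,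
        Algebra.TensorProduct.tmul_mul_tmul, hE, hF]
    | add x y hx hy => rw [TensorProduct.add_tmul, TensorProduct.tmul_add, add_mul, mul_add, hx, hy]
  · have h1 : ∀ (X : S ⊗[k] S) (Y : R ⊗[k] R), LinearMap.mul' k (S ⊗[k] R) (T (X ⊗ₜ Y)) =
        LinearMap.mul' k S X ⊗ₜ LinearMap.mul' k R Y := by
      intro X Y
      induction X with
      | zero => simp
      | add x y hx hy => rw [TensorProduct.add_tmul, map_add, map_add, hx, hy, map_add,
          TensorProduct.add_tmul]
      | tmul x y =>
        induction Y with
        | zero => simp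
        | add x y hx hy => rw [TensorProduct.tmul_add, map_add, map_add, hx, hy, map_add,
            TensorProduct.tmul_add]
        | tmul z w => simp [hT]
    rw [h1, hm, hn]; rfl

theorem exists_coproduct_of_projective (k : Type*) (A : Type*) [Field k] [Ring A] [Algebra k A]
    (h : letI := instModuleTensorProductMop k A; Module.Projective (A ⊗[k] Aᵐᵒᵖ) A) :
    ∃ Δ : A →ₗ[k] A ⊗[k] A, IsNearlyFrobenius k A Δ ∧
        LinearMap.mul' k A ∘ₗ Δ = LinearMap.id := by
  letI := instModuleTensorProductMop k A
  have hs : ∀ (a : A) (b : Aᵐᵒᵖ) (m : A), (a ⊗ₜ[k] b) • m = a * m * b.unop := fun a b m => by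
    rw [TensorProduct.Algebra.smul_def]; simp [mul_assoc]
  let f := LinearMap.toSpanSingleton (A ⊗[k] Aᵐᵒᵖ) A 1
  have hf : ∀ X, f X = X • (1 : A) := fun X => rfl
  obtain ⟨s, hs'⟩ := Module.projective_lifting_property f LinearMap.id
    (fun a => ⟨a ⊗ₜ 1, by rw [hf, hs]; simp⟩)
  let T : A ⊗[k] Aᵐᵒᵖ →ₗ[k] A ⊗[k] A :=
    TensorProduct.map LinearMap.id (MulOpposite.opLinearEquiv k).symm.toLinearMap
  have hT : ∀ x y, T (x ⊗ₜ y) = x ⊗ₜ y.unop := fun x y => by simp [T]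
  let s' : A →ₗ[k] A ⊗[k] Aᵐᵒᵖ :=
    { toFun := s
      map_add' := s.map_add
      map_smul' := fun c a => by
        have : c • a = ((c • (1 : A)) ⊗ₜ[k] (1 : Aᵐᵒᵖ)) • a := by rw [hs]; simp
        rw [this, map_smul, ← TensorProduct.smul_tmul', smul_eq_mul, RingHom.id_apply,
          ← Algebra.TensorProduct.one_def, smul_mul_assoc, one_mul] }
  refine ⟨T ∘ₗ s', fun a b => ⟨?_, ?_⟩, ?_⟩
  · have h1 : ∀ X, T ((a ⊗ₜ 1) * X) = (a ⊗ₜ[k] (1 : A)) * T X := by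
      intro X
      induction X with
      | zero => simp
      | tmul x y => simp [hT]
      | add x y hx hy => rw [mul_add, map_add, map_add, hx, hy, mul_add]
    have : a * b = (a ⊗ₜ[k] (1 : Aᵐᵒᵖ)) • b := by rw [hs]; simp
    change T (s (a * b)) = _ * T (s b)
    rw [this, map_smul, ← h1, smul_eq_mul]
  · have h1 : ∀ X, T ((1 ⊗ₜ MulOpposite.op b) * X) = T X * ((1 : A) ⊗ₜ[k] b) := by
      intro X
      induction X with
      | zero => simp
      | tmul x y => simp [hT]
      | add x y hx hy => rw [mul_add, map_add, map_add, hx, hy, add_mul]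
    have : a * b = ((1 : A) ⊗ₜ[k] MulOpposite.op b) • a := by rw [hs]; simp
    change T (s (a * b)) = T (s a) * _
    rw [this, map_smul, ← h1, smul_eq_mul]
  · ext a
    have h1 : ∀ X, LinearMap.mul' k A (T X) = f X := by
      intro X
      induction X with
      | zero => simp
      | tmul x y => rw [hf, hs, hT]; simp
      | add x y hx hy => rw [map_add, map_add, map_add, hx, hy]
    change LinearMap.mul' k A (T (s a)) = a
    rw [h1]
    exact DFunLike.congr_fun hs' a

theorem isSemisimpleRing_of_forall_projective {R : Type*} [Ring R]
    (h : ∀ I : Ideal R, Module.Projective R (R ⧸ I)) : IsSemisimpleRing R := by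
  refine (isSemisimpleModule_iff R R).2 ⟨fun I => ?_⟩
  have := h I
  obtain ⟨s, hs⟩ := Module.projective_lifting_property I.mkQ LinearMap.id I.mkQ_surjective
  have hs' : ∀ x, I.mkQ (s x) = x := fun x => DFunLike.congr_fun hs x
  refine ⟨LinearMap.range s, ?_, ?_⟩
  · rw [Submodule.disjoint_def]
    rintro _ hx ⟨y, rfl⟩
    have : I.mkQ (s y) = 0 := (Submodule.Quotient.mk_eq_zero I).2 hx
    rw [hs'] at this
    rw [this, map_zero]
  · rw [codisjoint_iff, eq_top_iff]
    intro x _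
    refine Submodule.mem_sup.2 ⟨x - s (I.mkQ x), ?_, s (I.mkQ x), ⟨_, rfl⟩, by abel⟩
    have : I.mkQ (x - s (I.mkQ x)) = 0 := by rw [map_sub, hs', sub_self]
    exact (Submodule.Quotient.mk_eq_zero I).1 this

/-- an algebra `A` admits a normalized nearly Frobenius coproduct
iff every module over the enveloping algebra `Aᵉ = A ⊗[k] Aᵐᵒᵖ` is projective,
iff `Aᵉ` is a semisimple ring (i.e. the category of `A`-bimodules is
semisimple). -/
theorem normalized_iff_bimodules_semisimple (k : Type u) (A : Type v) [Field k]
    [Ring A] [Algebra k A] :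
    ((∃ Δ : A →ₗ[k] A ⊗[k] A, IsNearlyFrobenius k A Δ ∧
        LinearMap.mul' k A ∘ₗ Δ = LinearMap.id) ↔
      (∀ (M : Type v) [AddCommGroup M] [Module (A ⊗[k] Aᵐᵒᵖ) M],
        Module.Projective (A ⊗[k] Aᵐᵒᵖ) M)) ∧
    ((∀ (M : Type v) [AddCommGroup M] [Module (A ⊗[k] Aᵐᵒᵖ) M],
        Module.Projective (A ⊗[k] Aᵐᵒᵖ) M) ↔
      IsSemisimpleRing (A ⊗[k] Aᵐᵒᵖ)) := by
  have h12 : (∃ Δ : A →ₗ[k] A ⊗[k] A, IsNearlyFrobenius k A Δ ∧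
        LinearMap.mul' k A ∘ₗ Δ = LinearMap.id) → IsSemisimpleRing (A ⊗[k] Aᵐᵒᵖ) := by
    rintro ⟨Δ, hΔ, hm⟩
    have : HasSepElt k A := ⟨Δ 1, fun s => by
      rw [← (hΔ s 1).1, ← (hΔ 1 s).2, one_mul, mul_one], DFunLike.congr_fun hm 1⟩
    exact (this.tensor this.mop).isSemisimpleRing
  have h23 : IsSemisimpleRing (A ⊗[k] Aᵐᵒᵖ) →
      ∀ (M : Type v) [AddCommGroup M] [Module (A ⊗[k] Aᵐᵒᵖ) M],
        Module.Projective (A ⊗[k] Aᵐᵒᵖ) M := fun h M _ _ =>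
    Module.projective_of_isSemisimpleRing _ _
  refine ⟨⟨fun h => h23 (h12 h), fun h => ?_⟩, fun h => ?_, h23⟩
  · exact exists_coproduct_of_projective k A (@h A _ (instModuleTensorProductMop k A))
  · exact isSemisimpleRing_of_forall_projective fun I => h _
end

section
/- Let A be an associative unital k-algebra admitting a normalized nearly Frobenius coproduct. Then A is finite-dimensional over k and A is a semisimple ring (every A-module is semisimple; equivalently every A-module is projective). -/
open TensorProduct

theorem semisimple_aux (k A : Type*) [Field k]
    [Ring A] [Algebra k A] (Δ : A →ₗ[k] A ⊗[k] A) (hΔ : IsNearlyFrobenius k A Δ)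
    (hn : ∀ a, LinearMap.mul' k A (Δ a) = a) : IsSemisimpleRing A := by
  refine { exists_isCompl := fun I => ?_ }
  obtain ⟨p, hp⟩ := LinearMap.exists_leftInverse_of_injective
    (I.restrictScalars k).subtype (Submodule.ker_subtype _)
  have hp' : ∀ x (hx : x ∈ I), (p x : A) = x := fun x hx => by
    have := LinearMap.congr_fun hp ⟨x, hx⟩
    exact congrArg Subtype.val this
  have hpm : ∀ x, (p x : A) ∈ I := fun x => (p x).2
  let q : A →ₗ[k] A := (I.restrictScalars k).subtype ∘ₗ p
  let Q : A ⊗[k] A →ₗ[k] A := LinearMap.mul' k A ∘ₗ LinearMap.lTensor A q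
  have hQ : ∀ x y, Q (x ⊗ₜ y) = x * (p y : A) := fun x y => by simp [Q, q]
  have hQI : ∀ t, Q t ∈ I := fun t => by
    induction t with
    | zero => simp
    | tmul x y => rw [hQ]; exact Ideal.mul_mem_left I _ (hpm y)
    | add x y hx hy => rw [map_add]; exact I.add_mem hx hy
  have hQa : ∀ a t, Q ((a ⊗ₜ[k] (1 : A)) * t) = a * Q t := fun a t => by
    induction t with
    | zero => simp
    | tmul x y => rw [Algebra.TensorProduct.tmul_mul_tmul, hQ, hQ, one_mul, mul_assoc]
    | add x y hx hy => rw [mul_add, map_add, map_add, hx, hy, mul_add]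
  have hQr : ∀ m ∈ I, ∀ t, Q (t * ((1 : A) ⊗ₜ[k] m)) =
      LinearMap.mul' k A (t * ((1 : A) ⊗ₜ[k] m)) := fun m hm t => by
    induction t with
    | zero => simp
    | tmul x y =>
      rw [Algebra.TensorProduct.tmul_mul_tmul, hQ, hp' _ (Ideal.mul_mem_left I _ hm),
        LinearMap.mul'_apply]
    | add x y hx hy => rw [add_mul, map_add, map_add, hx, hy]
  let P : A →ₗ[A] I :=
    { toFun := fun m => ⟨Q (Δ m), hQI _⟩
      map_add' := fun x y => by ext; simp
      map_smul' := fun a x => by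
        ext
        simp only [smul_eq_mul, RingHom.id_apply, Submodule.coe_smul]
        rw [(hΔ a x).1, hQa] }
  refine ⟨LinearMap.ker P, LinearMap.isCompl_of_proj (f := P) fun x => ?_⟩
  ext
  change Q (Δ x) = x
  have h1 := (hΔ 1 x).2
  rw [one_mul] at h1
  rw [h1, hQr _ x.2, ← h1, hn]

theorem finite_aux (k A : Type*) [Field k]
    [Ring A] [Algebra k A] (Δ : A →ₗ[k] A ⊗[k] A) (hΔ : IsNearlyFrobenius k A Δ)
    (hn : ∀ a, LinearMap.mul' k A (Δ a) = a) : FiniteDimensional k A := by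
  classical
  let b := Module.Basis.ofVectorSpace k A
  let E := TensorProduct.equivFinsuppOfBasisRight (M := A) b
  obtain ⟨T, hT⟩ := TensorProduct.exists_finset (Δ 1)
  let X : Finset A := T.image Prod.fst
  let Y : Finset A := (E (Δ 1)).support.image b
  have hV : ∀ a i, E (Δ a) i ∈ Submodule.span k (X : Set A) := fun a i => by
    have h1 := (hΔ 1 a).2
    rw [one_mul] at h1
    rw [h1, hT, Finset.sum_mul, map_sum, Finsupp.finsetSum_apply]
    refine Submodule.sum_mem _ fun z hz => ?_
    rw [Algebra.TensorProduct.tmul_mul_tmul, mul_one,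
      TensorProduct.equivFinsuppOfBasisRight_apply_tmul_apply]
    exact Submodule.smul_mem _ _ (Submodule.subset_span (Finset.mem_image_of_mem _ hz))
  have hL : ∀ a t i, E ((a ⊗ₜ[k] (1 : A)) * t) i = a * E t i := fun a t i => by
    induction t with
    | zero => simp
    | tmul x y =>
      rw [Algebra.TensorProduct.tmul_mul_tmul]
      simp [E, TensorProduct.equivFinsuppOfBasisRight_apply_tmul_apply]
    | add x y hx hy => rw [mul_add, map_add, map_add, Finsupp.add_apply, Finsupp.add_apply, hx, hy, mul_add]
  have he : Δ 1 = (E (Δ 1)).sum fun i m => m ⊗ₜ b i := by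
    conv_lhs => rw [← E.symm_apply_apply (Δ 1)]
    exact TensorProduct.equivFinsuppOfBasisRight_symm_apply _ _
  refine ⟨?_⟩
  have : (⊤ : Submodule k A) = Submodule.span k (X : Set A) * Submodule.span k (Y : Set A) := by
    refine (eq_top_iff.2 fun a _ => ?_).symm
    have ha : a = (E (Δ 1)).sum fun i m => (a * m) * b i := by
      conv_lhs => rw [← mul_one a, ← hn 1, he]
      simp only [Finsupp.sum, map_sum, LinearMap.mul'_apply, Finset.mul_sum, mul_assoc]
    rw [ha]
    refine Submodule.sum_mem _ fun i hi => Submodule.mul_mem_mul ?_ ?_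
    · have h1 := (hΔ a 1).1
      rw [mul_one] at h1
      rw [← hL, ← h1]
      exact hV a i
    · exact Submodule.subset_span (Finset.mem_coe.2 (Finset.mem_image_of_mem _ hi))
  rw [this]
  exact Submodule.FG.mul ⟨X, rfl⟩ ⟨Y, rfl⟩

/-- an algebra admitting a normalized nearly Frobenius coproduct
is finite dimensional and semisimple. -/
theorem finiteDimensional_and_semisimple_of_normalized (k A : Type*) [Field k]
    [Ring A] [Algebra k A]
    (h : ∃ Δ : A →ₗ[k] A ⊗[k] A, IsNearlyFrobenius k A Δ ∧
      LinearMap.mul' k A ∘ₗ Δ = LinearMap.id) :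
    FiniteDimensional k A ∧ IsSemisimpleRing A := by
  obtain ⟨Δ, hΔ, hn⟩ := h
  have hn' : ∀ a, LinearMap.mul' k A (Δ a) = a := fun a => LinearMap.congr_fun hn a
  exact ⟨finite_aux k A Δ hΔ hn', semisimple_aux k A Δ hΔ hn'⟩
end
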